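/- Let J(x) denote the number of Jordan–Pólya numbers not exceeding x. Then for every ε > 0 there exists x_2 such that for all x ≥ x_2, J(x) > exp((2−ε)·√(log x)/(log log x)). -/

import Mathlib

def JordanPolya (n : ℕ) : Prop :=
  ∃ s : Multiset ℕ, (∀ m ∈ s, 2 ≤ m) ∧ (s.map Nat.factorial).prod = n

/-! Products of factorials of primes are pairwise distinct: the largest factor of such a product is
the factorial of its largest prime divisor. If `k < π N`, the products of `k` factorials of primes
`p ≤ N` therefore provide at least `centralBinom k` Jordan–Pólya numbers up to `N ! ^ k`. With
`u = √(log x)`, taking `N ≈ β * u` and `k ≈ α * u / log u` keeps `N ! ^ k` below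
`x = exp (u ^ 2)` as soon as `α * β < 1`, while Chebyshev's lower bound gives `k < π N` as soon as
`α < β * log 2`. The best choice is `β = 1 / √(log 2)` with `α` just below `√(log 2)`, and
`centralBinom k = 4 ^ (k - o(k))` then exceeds `exp (c * u / log u)` for every
`c < √(log 2) * log 4`. -/

open Filter Real

open scoped Nat Nat.Prime Topology

theorem prime_dvd_prod_map_factorial_iff {p : ℕ} (hp : p.Prime) {s : Multiset ℕ} :
    p ∣ (s.map Nat.factorial).prod ↔ ∃ m ∈ s, p ≤ m := by
  simp only [← hp.dvd_factorial]
  exact ⟨hp.prime.exists_mem_multiset_map_dvd,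
    fun ⟨_, hm, hpm⟩ ↦ hpm.trans (Multiset.dvd_prod (Multiset.mem_map_of_mem _ hm))⟩

theorem exists_mem_mem_of_prod_map_factorial_eq {s t : Multiset ℕ} (hs : ∀ p ∈ s, p.Prime)
    (ht : ∀ p ∈ t, p.Prime) (hne : s ≠ 0)
    (h : (s.map Nat.factorial).prod = (t.map Nat.factorial).prod) : ∃ p ∈ s, p ∈ t := by
  obtain ⟨q, hqs, hq_max⟩ : ∃ q ∈ s, ∀ m ∈ s, m ≤ q := by
    simpa using s.toFinset.exists_max_image id (Multiset.toFinset_nonempty.2 hne)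
  obtain ⟨m, hmt, hqm⟩ : ∃ m ∈ t, q ≤ m := by
    rw [← prime_dvd_prod_map_factorial_iff (hs q hqs), ← h,
      prime_dvd_prod_map_factorial_iff (hs q hqs)]
    exact ⟨q, hqs, le_rfl⟩
  obtain ⟨m', hm's, hmm'⟩ : ∃ m' ∈ s, m ≤ m' := by
    rw [← prime_dvd_prod_map_factorial_iff (ht m hmt), h,
      prime_dvd_prod_map_factorial_iff (ht m hmt)]
    exact ⟨m, hmt, le_rfl⟩
  obtain rfl : q = m := hqm.antisymm (hmm'.trans (hq_max m' hm's))
  exact ⟨q, hqs, hmt⟩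

theorem injOn_prod_map_factorial :
    Set.InjOn (fun s : Multiset ℕ ↦ (s.map Nat.factorial).prod) {s | ∀ p ∈ s, p.Prime} := by
  intro s hs t ht h
  induction s using Multiset.strongInductionOn generalizing t with
  | ih s ih =>
    rcases eq_or_ne s 0 with rfl | hs0
    · by_contra! ht0
      obtain ⟨p, -, hp⟩ := exists_mem_mem_of_prod_map_factorial_eq ht hs ht0.symm h.symm
      exact Multiset.notMem_zero p hp
    · obtain ⟨q, hqs, hqt⟩ := exists_mem_mem_of_prod_map_factorial_eq hs ht hs0 h
      obtain ⟨s, rfl⟩ := Multiset.exists_cons_of_mem hqs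
      obtain ⟨t, rfl⟩ := Multiset.exists_cons_of_mem hqt
      simp only [Multiset.map_cons, Multiset.prod_cons,
        Nat.mul_right_inj q.factorial_ne_zero] at h
      rw [ih s (Multiset.lt_cons_self s q) (fun p hp ↦ hs p (Multiset.mem_cons_of_mem hp))
        (fun p hp ↦ ht p (Multiset.mem_cons_of_mem hp)) h]

theorem JordanPolya.pos {n : ℕ} (hn : JordanPolya n) : 0 < n := by
  obtain ⟨s, -, rfl⟩ := hn
  refine Nat.pos_of_ne_zero (Multiset.prod_ne_zero ?_)
  simp [Nat.factorial_ne_zero]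

/-- The counting function `J(x)` of the Jordan–Pólya numbers. -/
noncomputable def jordanPolyaCount (x : ℝ) : ℕ :=
  Set.ncard {n : ℕ | 0 < n ∧ JordanPolya n ∧ (n : ℝ) ≤ x}

theorem finite_setOf_jordanPolya_le (x : ℝ) :
    {n : ℕ | 0 < n ∧ JordanPolya n ∧ (n : ℝ) ≤ x}.Finite :=
  (Set.finite_Iic ⌊x⌋₊).subset fun _ hn ↦ Nat.le_floor hn.2.2

theorem jordanPolyaCount_mono : Monotone jordanPolyaCount := fun _ y hxy ↦
  Set.ncard_le_ncard (fun _ hn ↦ ⟨hn.1, hn.2.1, hn.2.2.trans hxy⟩) (finite_setOf_jordanPolya_le y)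

theorem multichoose_primeCounting_le_jordanPolyaCount (N k : ℕ) :
    (π N).multichoose k ≤ jordanPolyaCount ((N ! : ℝ) ^ k) := by
  let primes (s : Sym N.primesLE k) : Multiset ℕ := (s : Multiset N.primesLE).map Subtype.val
  have mem_primesLE (s : Sym N.primesLE k) : ∀ p ∈ primes s, p ∈ N.primesLE := by
    intro p hp
    obtain ⟨q, -, rfl⟩ := Multiset.mem_map.1 hp
    exact q.2
  have prod_le (s : Sym N.primesLE k) : ((primes s).map Nat.factorial).prod ≤ N ! ^ k := by
    refine (Multiset.prod_le_pow_card _ (N !) ?_).trans_eq (by simp [primes])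
    simp only [Multiset.forall_mem_map_iff]
    exact fun p hp ↦ Nat.factorial_le (Nat.le_of_mem_primesLE (mem_primesLE s p hp))
  let product (s : Sym N.primesLE k) :
      {n : ℕ | 0 < n ∧ JordanPolya n ∧ (n : ℝ) ≤ (N ! : ℝ) ^ k} :=
    have hJP : JordanPolya ((primes s).map Nat.factorial).prod :=
      ⟨_, fun p hp ↦ Nat.two_le_of_mem_primesLE (mem_primesLE s p hp), rfl⟩
    ⟨_, hJP.pos, hJP, mod_cast prod_le s⟩
  have product_injective : Function.Injective product := fun s t h ↦
    Subtype.ext <| Multiset.map_injective Subtype.val_injective <|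
      injOn_prod_map_factorial (fun p hp ↦ Nat.prime_of_mem_primesLE (mem_primesLE s p hp))
        (fun p hp ↦ Nat.prime_of_mem_primesLE (mem_primesLE t p hp)) (congrArg Subtype.val h)
  have := (finite_setOf_jordanPolya_le ((N ! : ℝ) ^ k)).to_subtype
  calc (π N).multichoose k = Nat.card (Sym N.primesLE k) := by
        rw [Sym.natCard_sym_eq_multichoose, Nat.card_eq_fintype_card, Fintype.card_coe,
          Nat.primesLE_card_eq_primeCounting]
    _ ≤ jordanPolyaCount ((N ! : ℝ) ^ k) := Nat.card_le_card_of_injective product product_injective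

theorem centralBinom_le_jordanPolyaCount {N k : ℕ} (hk : k < π N) :
    k.centralBinom ≤ jordanPolyaCount ((N ! : ℝ) ^ k) :=
  calc k.centralBinom = (2 * k).choose k := k.centralBinom_eq_two_mul_choose
    _ ≤ (π N + k - 1).choose k := Nat.choose_le_choose k (by lia)
    _ = (π N).multichoose k := (Nat.multichoose_eq _ _).symm
    _ ≤ jordanPolyaCount ((N ! : ℝ) ^ k) := multichoose_primeCounting_le_jordanPolyaCount N k

theorem eventually_log_le_mul {δ : ℝ} (hδ : 0 < δ) : ∀ᶠ y in atTop, log y ≤ δ * y := by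
  filter_upwards [isLittleO_log_id_atTop.bound hδ, eventually_ge_atTop 0] with y hy hy0
  simpa [abs_of_nonneg hy0] using (le_abs_self _).trans hy

theorem eventually_log_const_mul_le {b c : ℝ} (hb : 0 < b) (hc : 1 < c) :
    ∀ᶠ y in atTop, log (b * y) ≤ c * log y := by
  filter_upwards [(tendsto_log_atTop.const_mul_atTop (sub_pos.2 hc)).eventually_ge_atTop (log b),
    eventually_gt_atTop 0] with y hy hy0
  rw [log_mul hb.ne' hy0.ne']
  linarith

theorem tendsto_div_log_atTop : Tendsto (fun y : ℝ ↦ y / log y) atTop atTop := by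
  have hpos : ∀ᶠ y in atTop, 0 < log y / y := by
    filter_upwards [eventually_gt_atTop 1] with y hy
    exact div_pos (log_pos hy) (by linarith)
  have hzero : Tendsto (fun y : ℝ ↦ log y / y) atTop (𝓝 0) :=
    isLittleO_log_id_atTop.tendsto_div_nhds_zero
  exact (tendsto_nhdsWithin_iff.2 ⟨hzero, hpos⟩).inv_tendsto_nhdsGT_zero.congr fun _ ↦ inv_div _ _

theorem eventually_mul_div_log_lt_primeCounting {c : ℝ} (hc : c < log 2) :
    ∀ᶠ y : ℝ in atTop, c * (y / log y) < π ⌊y⌋₊ := by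
  obtain ⟨δ, hδ, hcδ⟩ : ∃ δ > 0, c + 2 * δ = log 2 := ⟨(log 2 - c) / 2, by linarith, by ring⟩
  filter_upwards [(tendsto_atTop_add_const_right atTop 2 tendsto_id).eventually
      (eventually_log_le_mul hδ), eventually_gt_atTop 1,
    (tendsto_id.const_mul_atTop hδ).eventually_gt_atTop (log 2 + 2 * δ)] with y hlog hy1 hδy
  simp only [id] at hlog hδy
  have hnum : c * y < (y - 1) * log 2 - log (y + 2) := by
    rw [← hcδ] at hδy ⊢
    linarith
  calc c * (y / log y) = c * y / log y := (mul_div_assoc _ _ _).symm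
    _ < ((y - 1) * log 2 - log (y + 2)) / log y := div_lt_div_of_pos_right hnum (log_pos hy1)
    _ ≤ π ⌊y⌋₊ := Chebyshev.pi_ge' hy1

theorem eventually_mul_div_log_lt_primeCounting_const_mul {α β : ℝ} (hα : 0 < α) (hβ : 0 < β)
    (h : α < β * log 2) : ∀ᶠ u : ℝ in atTop, α * (u / log u) < π ⌊β * u⌋₊ := by
  obtain ⟨c, hαc, hc⟩ := exists_between ((div_lt_iff₀' hβ).2 h)
  have hc0 : 0 < c := (div_pos hα hβ).trans hαc
  rw [div_lt_iff₀' hβ] at hαc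
  filter_upwards [(tendsto_id.const_mul_atTop hβ).eventually
      (eventually_mul_div_log_lt_primeCounting hc),
    (tendsto_id.const_mul_atTop hβ).eventually_gt_atTop 1,
    eventually_log_const_mul_le hβ ((one_lt_div hα).2 hαc), eventually_gt_atTop 1]
    with u hπ hβu hlog hu
  simp only [id] at hπ hβu
  have hu' := log_pos hu
  have hβu' := log_pos hβu
  refine lt_of_le_of_lt ?_ hπ
  calc α * (u / log u) = β * c * u / (β * c / α * log u) := by field_simp
    _ ≤ β * c * u / log (β * u) := by gcongr
    _ = c * (β * u / log (β * u)) := by ring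

theorem factorial_floor_le_exp_mul_log {y : ℝ} (hy : 1 ≤ y) : (⌊y⌋₊ ! : ℝ) ≤ exp (y * log y) := by
  have hfloor : (⌊y⌋₊ : ℝ) ≤ y := Nat.floor_le (by linarith)
  calc (⌊y⌋₊ ! : ℝ) ≤ (⌊y⌋₊ : ℝ) ^ ⌊y⌋₊ := mod_cast Nat.factorial_le_pow _
    _ ≤ y ^ ⌊y⌋₊ := by gcongr
    _ = exp (⌊y⌋₊ * log y) := by rw [exp_nat_mul, exp_log (by linarith)]
    _ ≤ exp (y * log y) := by
      have := log_nonneg hy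
      gcongr

theorem eventually_factorial_pow_le_exp_sq {α β : ℝ} (hα : 0 < α) (hβ : 0 < β) (h : α * β < 1) :
    ∀ᶠ u : ℝ in atTop, (⌊β * u⌋₊ ! : ℝ) ^ ⌊α * (u / log u)⌋₊ ≤ exp (u ^ 2) := by
  filter_upwards [(tendsto_id.const_mul_atTop hβ).eventually_ge_atTop 1,
    eventually_log_const_mul_le hβ ((one_lt_div (mul_pos hα hβ)).2 h), eventually_gt_atTop 1]
    with u hβu hlog hu
  simp only [id] at hβu
  have hu' := log_pos hu
  have hβu' := log_nonneg hβu
  calc (⌊β * u⌋₊ ! : ℝ) ^ ⌊α * (u / log u)⌋₊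
      ≤ exp (β * u * log (β * u)) ^ ⌊α * (u / log u)⌋₊ := by
        gcongr
        exact factorial_floor_le_exp_mul_log hβu
    _ = exp (⌊α * (u / log u)⌋₊ * (β * u * log (β * u))) := (exp_nat_mul _ _).symm
    _ ≤ exp (α * (u / log u) * (β * u * (1 / (α * β) * log u))) := by
        gcongr
        exact Nat.floor_le (by positivity)
    _ = exp (u ^ 2) := by
        congr 1
        field_simp

theorem eventually_exp_mul_lt_centralBinom {c : ℝ} (hc : c < log 4) :
    ∀ᶠ k : ℕ in atTop, exp (c * k) < k.centralBinom := by
  obtain ⟨δ, hδ, hcδ⟩ : ∃ δ > 0, c + 3 * δ = log 4 := ⟨(log 4 - c) / 3, by linarith, by ring⟩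
  have hodd : Tendsto (fun k : ℕ ↦ 2 * (k : ℝ) + 1) atTop atTop :=
    tendsto_atTop_add_const_right _ _ (tendsto_natCast_atTop_atTop.const_mul_atTop two_pos)
  filter_upwards [hodd.eventually (eventually_log_le_mul hδ), eventually_gt_atTop 1]
    with k hlog hk
  have hk' : (1 : ℝ) < k := mod_cast hk
  have hlt : (2 * k + 1) * exp (c * k) < 4 ^ k := by
    calc (2 * k + 1) * exp (c * k) = exp (log (2 * k + 1) + c * k) := by
          rw [exp_add, exp_log (by positivity)]
      _ < exp (k * log 4) := by
          rw [exp_lt_exp, ← hcδ]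
          nlinarith
      _ = 4 ^ k := by rw [exp_nat_mul, exp_log (by norm_num)]
  have hle : (4 : ℝ) ^ k ≤ (2 * k + 1) * k.centralBinom :=
    mod_cast Nat.four_pow_le_two_mul_add_one_mul_central_binom k
  exact lt_of_mul_lt_mul_left (hlt.trans_le hle) (by positivity)

theorem eventually_exp_mul_lt_centralBinom_floor {a c : ℝ} (ha : 0 < a) (hc : c < a * log 4) :
    ∀ᶠ t : ℝ in atTop, exp (c * t) < ⌊a * t⌋₊.centralBinom := by
  obtain ⟨d, hcd, hd⟩ := exists_between (max_lt ((div_lt_iff₀' ha).2 hc) (log_pos (by norm_num)))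
  rw [max_lt_iff, div_lt_iff₀' ha] at hcd
  have hfloor : Tendsto (fun t : ℝ ↦ ⌊a * t⌋₊) atTop atTop :=
    tendsto_nat_floor_atTop.comp (tendsto_id.const_mul_atTop ha)
  have hratio : Tendsto (fun t : ℝ ↦ d * ((⌊a * t⌋₊ : ℝ) / t)) atTop (𝓝 (d * a)) :=
    (tendsto_nat_floor_mul_div_atTop ha.le).const_mul d
  filter_upwards [hfloor.eventually (eventually_exp_mul_lt_centralBinom hd),
    hratio.eventually_const_le (mul_comm a d ▸ hcd.1), eventually_gt_atTop 0]
    with t hlt hle ht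
  refine lt_of_le_of_lt (exp_le_exp.2 ?_) hlt
  rwa [← mul_div_assoc, le_div_iff₀ ht] at hle

theorem eventually_exp_lt_jordanPolyaCount_exp_sq {c : ℝ} (hc : c < √(log 2) * log 4) :
    ∀ᶠ u : ℝ in atTop, exp (c * (u / log u)) < jordanPolyaCount (exp (u ^ 2)) := by
  have hr : 0 < √(log 2) := sqrt_pos.2 (log_pos one_lt_two)
  have hlog4 : (0 : ℝ) < log 4 := log_pos (by norm_num)
  obtain ⟨α, hα, hαr⟩ := exists_between (max_lt hr ((div_lt_iff₀ hlog4).2 hc))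
  rw [max_lt_iff, div_lt_iff₀ hlog4] at hα
  have hβ : α < (√(log 2))⁻¹ * log 2 := by
    rwa [inv_mul_eq_div, div_sqrt]
  have hαβ : α * (√(log 2))⁻¹ < 1 := by
    rwa [← div_eq_mul_inv, div_lt_one hr]
  filter_upwards [eventually_mul_div_log_lt_primeCounting_const_mul hα.1 (inv_pos.2 hr) hβ,
    eventually_factorial_pow_le_exp_sq hα.1 (inv_pos.2 hr) hαβ,
    tendsto_div_log_atTop.eventually (eventually_exp_mul_lt_centralBinom_floor hα.1 hα.2),
    tendsto_div_log_atTop.eventually_ge_atTop 0] with u hπ hfactorial hbinom hu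
  have hk : ⌊α * (u / log u)⌋₊ < π ⌊(√(log 2))⁻¹ * u⌋₊ :=
    (Nat.floor_lt (mul_nonneg hα.1.le hu)).2 hπ
  calc exp (c * (u / log u)) < ⌊α * (u / log u)⌋₊.centralBinom := hbinom
    _ ≤ jordanPolyaCount (exp (u ^ 2)) :=
      mod_cast (centralBinom_le_jordanPolyaCount hk).trans (jordanPolyaCount_mono hfactorial)

theorem jp_counting_lower_general {c : ℝ} (hc : c < 2 * √(log 2) * log 4) :
    ∀ᶠ x : ℝ in atTop, exp (c * √(log x) / log (log x)) < jordanPolyaCount x := by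
  have hc2 : c / 2 < √(log 2) * log 4 := by linarith
  filter_upwards [(tendsto_sqrt_atTop.comp tendsto_log_atTop).eventually
    (eventually_exp_lt_jordanPolyaCount_exp_sq hc2), eventually_gt_atTop 1] with x hx hx1
  have hlog : 0 ≤ log x := (log_pos hx1).le
  simp only [Function.comp_apply, sq_sqrt hlog, exp_log (one_pos.trans hx1), log_sqrt hlog] at hx
  convert! hx using 2
  ring

theorem two_lt_two_mul_sqrt_log_two_mul_log_four : 2 < 2 * √(log 2) * log 4 := by
  have hlog4 : log 4 = 2 * log 2 := by
    rw [show (4 : ℝ) = 2 ^ 2 by norm_num, log_pow, Nat.cast_two]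
  have hsqrt : 0.8 < √(log 2) := lt_sqrt_of_sq_lt (by linarith [log_two_gt_d9])
  rw [hlog4]
  nlinarith [log_two_gt_d9]

theorem jp_counting_lower (ε : ℝ) (hε : 0 < ε) :
    ∃ x₂ : ℝ, ∀ x : ℝ, x₂ ≤ x →
      ((Set.ncard {n : ℕ | 0 < n ∧ JordanPolya n ∧ (n : ℝ) ≤ x} : ℝ)) >
        Real.exp ((2 - ε) * Real.sqrt (Real.log x) / Real.log (Real.log x)) :=
  eventually_atTop.1 <| jp_counting_lower_general <|
    (sub_lt_self 2 hε).trans two_lt_two_mul_sqrt_log_two_mul_log_four
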